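/- Let J ∈ ℕ and μ > 0, and let f : ℝ^J → ℝ be defined by f(m) = μ ln(1 + ∑_{k=1}^J exp(m_k/μ)). Then the gradient map m ↦ ∇f(m) is Lipschitz continuous on ℝ^J (with respect to the Euclidean norm) with Lipschitz constant 1/μ. -/

import Mathlib

lemma lse_cov_bound {J : ℕ} (p z v : Fin J → ℝ) (hp : ∀ j, 0 ≤ p j) (hP : ∑ j, p j ≤ 1) :
    (∑ j, z j * (p j * (v j - ∑ k, p k * v k))) ^ 2 ≤ (∑ j, z j ^ 2) * ∑ j, v j ^ 2 := by
  have hp1 : ∀ j, p j ≤ 1 := fun j =>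
    (Finset.single_le_sum (f := p) (fun i _ => hp i) (Finset.mem_univ j)).trans hP
  refine (Finset.sum_mul_sq_le_sq_mul_sq _ _ _).trans ?_
  refine mul_le_mul_of_nonneg_left ?_ (Finset.sum_nonneg fun i _ => sq_nonneg _)
  set a := ∑ k, p k * v k with ha
  have h1 : ∑ j, (p j * (v j - a)) ^ 2 ≤ ∑ j, (p j * v j ^ 2 - 2 * a * (p j * v j) + a ^ 2 * p j) := by
    refine Finset.sum_le_sum fun j _ => ?_
    nlinarith [mul_nonneg (mul_nonneg (hp j) (sub_nonneg.2 (hp1 j))) (sq_nonneg (v j - a))]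
  rw [Finset.sum_add_distrib, Finset.sum_sub_distrib, ← Finset.mul_sum, ← Finset.mul_sum, ← ha] at h1
  have h2 : ∑ j, p j * v j ^ 2 ≤ ∑ j, v j ^ 2 :=
    Finset.sum_le_sum fun j _ => mul_le_of_le_one_left (sq_nonneg _) (hp1 j)
  nlinarith [mul_nonneg (sq_nonneg a) (sub_nonneg.2 hP), sq_nonneg a]

lemma lse_mvt {J : ℕ} (μ : ℝ) (z x v : Fin J → ℝ) :
    (∑ j, z j * (Real.exp ((x j + v j) / μ) / (1 + ∑ k, Real.exp ((x k + v k) / μ)))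
      - ∑ j, z j * (Real.exp (x j / μ) / (1 + ∑ k, Real.exp (x k / μ)))) ^ 2
    ≤ (1 / μ) ^ 2 * ((∑ j, z j ^ 2) * ∑ j, v j ^ 2) := by
  let e : Fin J → ℝ → ℝ := fun j t => Real.exp ((x j + t * v j) / μ)
  let D : ℝ → ℝ := fun t => 1 + ∑ k, e k t
  have hD : ∀ t, 0 < D t := fun t =>
    add_pos_of_pos_of_nonneg one_pos (Finset.sum_nonneg fun i _ => (Real.exp_pos _).le)
  have he : ∀ j t, HasDerivAt (e j) (e j t * (v j / μ)) t := by
    intro j t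
    have h : HasDerivAt (fun t : ℝ => (x j + t * v j) / μ) (v j / μ) t := by
      simpa using (((hasDerivAt_id t).mul_const (v j)).const_add (x j)).div_const μ
    exact h.exp
  have hDd : ∀ t, HasDerivAt D (∑ k, e k t * (v k / μ)) t := fun t =>
    (HasDerivAt.fun_sum fun k _ => he k t).const_add 1
  have hg : ∀ t, HasDerivAt (fun t => ∑ j, z j * (e j t / D t))
      (∑ j, z j * ((e j t * (v j / μ) * D t - e j t * ∑ k, e k t * (v k / μ)) / D t ^ 2)) t :=
    fun t => HasDerivAt.fun_sum fun j _ => ((he j t).fun_div (hDd t) (hD t).ne').const_mul (z j)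
  obtain ⟨t, -, ht⟩ := exists_hasDerivAt_eq_slope _ _ (zero_lt_one (α := ℝ))
    (fun t _ => (hg t).continuousAt.continuousWithinAt) (fun t _ => hg t)
  simp only [sub_zero, div_one] at ht
  have h0 : ∀ j, e j 0 = Real.exp (x j / μ) := fun j => by simp [e]
  have h1 : ∀ j, e j 1 = Real.exp ((x j + v j) / μ) := fun j => by simp [e]
  simp only [D, h0, h1] at ht
  rw [← ht]
  have key := lse_cov_bound (fun j => e j t / D t) z v
    (fun j => div_nonneg (Real.exp_pos _).le (hD t).le) (by
      rw [← Finset.sum_div, div_le_one (hD t)]; simp [D])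
  refine le_trans (le_of_eq ?_) (mul_le_mul_of_nonneg_left key (sq_nonneg (1 / μ)))
  rw [← mul_pow, Finset.mul_sum]
  congr 1
  refine Finset.sum_congr rfl fun j _ => ?_
  have hs : ∑ k, e k t * (v k / μ) = (1 / μ) * D t * ∑ k, e k t / D t * v k := by
    rw [Finset.mul_sum]
    refine Finset.sum_congr rfl fun k _ => ?_
    have := (hD t).ne'
    field_simp
  rw [hs]
  change z j * ((e j t * (v j / μ) * D t - _) / D t ^ 2) = _
  have := (hD t).ne'
  generalize ∑ k, e k t / D t * v k = S
  generalize D t = d at *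
  field_simp

/-- The gradient map of the μ-smooth approximation `f(m) = μ ln(1 + ∑_k exp(m_k/μ))`,
namely `m ↦ (exp(m_j/μ) / (1 + ∑_k exp(m_k/μ)))_j`, is Lipschitz continuous on
Euclidean space with constant `1/μ`. -/
theorem logsumexp_grad_lipschitz (J : ℕ) (μ : ℝ) (hμ : 0 < μ)
    (F : EuclideanSpace ℝ (Fin J) → EuclideanSpace ℝ (Fin J))
    (hF : ∀ m j, F m j = Real.exp (m j / μ) / (1 + ∑ k, Real.exp (m k / μ)))
    (c : NNReal) (hc : (c : ℝ) = 1 / μ) :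
    LipschitzWith c F := by
  refine LipschitzWith.of_dist_le_mul fun y x => ?_
  have h := lse_mvt μ (fun j => F y j - F x j) (fun j => x j) (fun j => y j - x j)
  simp only [add_sub_cancel, ← hF] at h
  rw [← Finset.sum_sub_distrib] at h
  have e1 : ∑ j, ((F y j - F x j) * F y j - (F y j - F x j) * F x j)
      = ∑ j, (F y j - F x j) ^ 2 := Finset.sum_congr rfl fun j _ => by ring
  have n1 : dist (F y) (F x) ^ 2 = ∑ j, (F y j - F x j) ^ 2 := by
    rw [EuclideanSpace.dist_eq, Real.sq_sqrt (Finset.sum_nonneg fun i _ => sq_nonneg _)]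
    simp [Real.dist_eq, sq_abs]
  have n2 : dist y x ^ 2 = ∑ j, (y j - x j) ^ 2 := by
    rw [EuclideanSpace.dist_eq, Real.sq_sqrt (Finset.sum_nonneg fun i _ => sq_nonneg _)]
    simp [Real.dist_eq, sq_abs]
  rw [e1, ← n1, ← n2, ← hc] at h
  rcases (dist_nonneg (x := F y) (y := F x)).eq_or_lt with h0 | h0
  · rw [← h0]; positivity
  · refine (pow_le_pow_iff_left₀ h0.le (by positivity) two_ne_zero).1 ?_
    have : 0 < dist (F y) (F x) ^ 2 := by positivity
    refine le_of_mul_le_mul_left ?_ this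
    nlinarith
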